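/- Let d ≥ 2 be an integer, 1/d < p < 1, and let r_{n,k} be the root-cluster weights for random increasing d-ary trees (φ(δ)=d!/(d-δ)! for 0≤δ≤d, φ(δ)=0 for δ>d). Then for every integer k ≥ 1, the normalized k-th moment of the root-cluster size satisfies lim_{n→∞} m_k(n)/n^{k(pd-1)/(d-1)} = D_k·Γ(1/(d-1))/Γ((kpd-k+1)/(d-1)), where D_k is given by the Bell-polynomial recursion. -/

import Mathlib

open Finset Filter Asymptotics

/-- The root-cluster weight recursion. -/
noncomputable def clusterRec (p : ℝ) (φ : ℕ → ℝ) (r : ℕ → ℕ → ℝ) (b : ℕ → ℝ) : Prop :=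
  (∀ m, b m = ∑ k ∈ Finset.Icc 1 m, r m k) ∧
  ∀ n k : ℕ, 1 ≤ n → 1 ≤ k →
    r n k =
      ∑ δ ∈ Finset.range n, ∑ s ∈ (Finset.range (δ + 1)).attach,
        (δ.choose s.1 : ℝ) * (φ δ / (δ.factorial : ℝ)) *
          ∑ f ∈ (Finset.Nat.antidiagonalTuple δ (n - 1)).filter (fun f => ∀ i, 1 ≤ f i),
            (((n - 1).factorial : ℝ) / ∏ i, ((f i).factorial : ℝ)) *
              ∑ g ∈ (Finset.Nat.antidiagonalTuple s.1 (k - 1)).filter (fun g => ∀ i, 1 ≤ g i),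
                p ^ s.1 * (1 - p) ^ (δ - s.1) *
                  (∏ i : Fin s.1,
                    r (f (Fin.castLE (Nat.lt_succ_iff.mp (Finset.mem_range.mp s.2)) i)) (g i)) *
                  ∏ j ∈ Finset.univ.filter (fun j : Fin δ => s.1 ≤ (j : ℕ)), b (f j)

/-- Partial Bell polynomials. -/
noncomputable def bellPartial (k j : ℕ) (x : ℕ → ℝ) : ℝ :=
  ∑ m ∈ (Fintype.piFinset (fun _ : Fin (k - j + 1) => Finset.range (k + 1))).filter
      (fun m : Fin (k - j + 1) → ℕ => (∑ i : Fin (k - j + 1), ((i : ℕ) + 1) * m i) = k ∧ (∑ i, m i) = j),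
    (k.factorial : ℝ) *
      ∏ i : Fin (k - j + 1), x ((i : ℕ) + 1) ^ m i /
        (((m i).factorial : ℝ) * (((i : ℕ) + 1).factorial : ℝ) ^ m i)


/-- coefficients of `(1-z)^{-a}` -/
noncomputable def wc (a : ℝ) (n : ℕ) : ℝ := (∏ i ∈ Finset.range n, (a + i)) / (n.factorial : ℝ)

noncomputable def WS (a : ℝ) : PowerSeries ℝ := PowerSeries.mk (wc a)

lemma wc_zero (a : ℝ) : wc a 0 = 1 := by simp [wc]

lemma wc_succ (a : ℝ) (n : ℕ) : wc a (n+1) = (n + a) / (n + 1) * wc a n := by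
  have h1 : ((n:ℝ) + 1) ≠ 0 := by positivity
  have h2 : (n.factorial : ℝ) ≠ 0 := by positivity
  simp only [wc, Finset.prod_range_succ, Nat.factorial_succ]
  push_cast
  field_simp
  ring

lemma wc_pos {a : ℝ} (ha : 0 < a) (n : ℕ) : 0 < wc a n := by
  unfold wc
  have : 0 < ∏ i ∈ Finset.range n, (a + (i:ℝ)) := Finset.prod_pos (fun i _ => by positivity)
  positivity

lemma wc_shift (a : ℝ) (n : ℕ) : wc a (n+1) = a / (n + 1) * wc (a+1) n := by
  have h1 : ((n:ℝ) + 1) ≠ 0 := by positivity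
  have h2 : (n.factorial : ℝ) ≠ 0 := by positivity
  simp only [wc, Finset.prod_range_succ', Nat.factorial_succ]
  push_cast
  have : ∏ x ∈ Finset.range n, (a + ((x:ℝ) + 1)) = ∏ x ∈ Finset.range n, (a + 1 + (x:ℝ)) :=
    Finset.prod_congr rfl (fun _ _ => by ring)
  rw [this]
  field_simp
  ring

lemma wc_one (n : ℕ) : wc 1 n = 1 := by
  induction n with
  | zero => exact wc_zero 1
  | succ n ih =>
    rw [wc_succ, ih]
    have h1 : ((n:ℝ) + 1) ≠ 0 := by positivity
    field_simp

lemma WS_mul (a b : ℝ) : WS a * WS b = WS (a + b) := by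
  ext n
  induction n with
  | zero => simp [WS, wc_zero, PowerSeries.coeff_mul]
  | succ n ih =>
    have e : ∀ (c : ℝ) (m : ℕ), ((m:ℝ)+1) * wc c (m+1) = (m + c) * wc c m := by
      intro c m
      rw [wc_succ]
      have h1 : ((m:ℝ) + 1) ≠ 0 := by positivity
      field_simp
    have h : ((n:ℝ)+1) * PowerSeries.coeff (n+1) (WS a * WS b)
        = (n + (a+b)) * PowerSeries.coeff n (WS a * WS b) := by
      simp only [WS, PowerSeries.coeff_mul, PowerSeries.coeff_mk]
      have l : ((n:ℝ)+1) * ∑ x ∈ antidiagonal (n+1), wc a x.1 * wc b x.2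
          = ∑ x ∈ antidiagonal (n+1), ((x.1:ℝ) * wc a x.1) * wc b x.2
           + ∑ x ∈ antidiagonal (n+1), wc a x.1 * (x.2 * wc b x.2) := by
        rw [mul_sum, ← sum_add_distrib]
        refine sum_congr rfl fun x hx => ?_
        rw [HasAntidiagonal.mem_antidiagonal] at hx
        have : (n:ℝ) + 1 = x.1 + x.2 := by exact_mod_cast hx.symm
        rw [this]; ring
      rw [l, Finset.Nat.sum_antidiagonal_succ, Finset.Nat.sum_antidiagonal_succ']
      simp only [Nat.cast_zero, zero_mul, mul_zero, zero_add, add_zero, Nat.cast_add, Nat.cast_one, e]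
      rw [mul_sum, ← sum_add_distrib]
      refine sum_congr rfl fun x hx => ?_
      rw [HasAntidiagonal.mem_antidiagonal] at hx
      have : (n:ℝ) = x.1 + x.2 := by exact_mod_cast hx.symm
      rw [this]; ring
    have h1 : ((n:ℝ) + 1) ≠ 0 := by positivity
    apply mul_left_cancel₀ h1
    rw [h, ih]
    simp only [WS, PowerSeries.coeff_mk]
    rw [e]

lemma WS_pow (a : ℝ) (m : ℕ) : WS a ^ (m+1) = WS ((m+1) * a) := by
  induction m with
  | zero => simp
  | succ m ih => rw [pow_succ, ih, WS_mul]; congr 1; push_cast; ring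

lemma WS_one_mul_succ (F : PowerSeries ℝ) (n : ℕ) :
    PowerSeries.coeff (n+1) (WS 1 * F) = PowerSeries.coeff n (WS 1 * F) + PowerSeries.coeff (n+1) F := by
  simp only [WS, PowerSeries.coeff_mul, PowerSeries.coeff_mk, wc_one, one_mul]
  rw [Finset.Nat.sum_antidiagonal_succ]
  simp [add_comm]

lemma wc_asymp {a : ℝ} (ha : 0 < a) :
    Tendsto (fun n : ℕ => wc a n / (n:ℝ) ^ (a - 1)) atTop (nhds (1 / Real.Gamma a)) := by
  have h := (Real.GammaSeq_tendsto_Gamma a).inv₀ (Real.Gamma_pos_of_pos ha).ne'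
  have h2 : Tendsto (fun n : ℕ => (n:ℝ) / (n + a)) atTop (nhds 1) := by
    have := tendsto_natCast_div_add_atTop a
    simpa using this
  have h3 := h.mul h2
  rw [mul_one, ← one_div] at h3
  refine h3.congr' ?_
  filter_upwards [eventually_gt_atTop 0] with n hn
  have hn' : (0:ℝ) < n := by exact_mod_cast hn
  unfold Real.GammaSeq wc
  rw [Finset.prod_range_succ, Real.rpow_sub hn', Real.rpow_one]
  have h5 : 0 < ∏ i ∈ Finset.range n, (a + (i:ℝ)) := Finset.prod_pos (fun i _ => by positivity)
  have h6 : (0:ℝ) < (n:ℝ)^a := by positivity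
  have h7 : (n.factorial : ℝ) ≠ 0 := by positivity
  have h8 : a + n ≠ 0 := by positivity
  have h9 : n + a ≠ 0 := by positivity
  field_simp
  ring

lemma wc_ratio {a b : ℝ} (ha : 0 < a) (hb : 0 < b) :
    Tendsto (fun n : ℕ => (wc a n / wc b n) / (n:ℝ) ^ (a - b)) atTop
      (nhds (Real.Gamma b / Real.Gamma a)) := by
  have h := (wc_asymp ha).div (wc_asymp hb) (by have := Real.Gamma_pos_of_pos hb; positivity)
  have e : 1 / Real.Gamma a / (1 / Real.Gamma b) = Real.Gamma b / Real.Gamma a := by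
    rw [div_div_eq_mul_div, div_one]; ring
  rw [e] at h
  refine h.congr' ?_
  filter_upwards [eventually_gt_atTop 0] with n hn
  have hn' : (0:ℝ) < n := by exact_mod_cast hn
  have : a - b = (a - 1) - (b - 1) := by ring
  simp only [Pi.div_apply]
  rw [this, Real.rpow_sub hn' (a-1)]
  have := wc_pos hb n
  field_simp

lemma wc_ratio_zero {a b : ℝ} (ha : 0 < a) (hb : a < b) :
    Tendsto (fun n : ℕ => wc a n / wc b n) atTop (nhds 0) := by
  have h := (wc_ratio ha (ha.trans hb)).mul
    ((tendsto_rpow_neg_atTop (sub_pos.2 hb)).comp tendsto_natCast_atTop_atTop)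
  rw [mul_zero] at h
  refine h.congr' ?_
  filter_upwards [eventually_gt_atTop 0] with n hn
  have hn' : (0:ℝ) < n := by exact_mod_cast hn
  have : -(b - a) = a - b := by ring
  simp only [Function.comp, this]
  field_simp

lemma wc_ratio_top {a b : ℝ} (ha : 0 < a) (hb : a < b) :
    Tendsto (fun n : ℕ => wc b n / wc a n) atTop atTop := by
  have h := (wc_ratio_zero ha hb)
  have h2 : Tendsto (fun n : ℕ => wc a n / wc b n) atTop (nhdsWithin 0 (Set.Ioi 0)) := by
    refine tendsto_nhdsWithin_iff.2 ⟨h, Eventually.of_forall fun n => ?_⟩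
    exact div_pos (wc_pos ha n) (wc_pos (ha.trans hb) n)
  refine (h2.inv_tendsto_nhdsGT_zero).congr fun n => ?_
  simp

lemma wc_shift_ratio {a : ℝ} (ha : 0 < a) (j : ℕ) :
    Tendsto (fun n : ℕ => wc a n / wc a (n+j)) atTop (nhds 1) := by
  induction j with
  | zero =>
    refine tendsto_const_nhds.congr fun n => ?_
    rw [add_zero, div_self (wc_pos ha n).ne']
  | succ j ih =>
    have h1 : Tendsto (fun n : ℕ => wc a n / wc a (n+1)) atTop (nhds 1) := by
      have h2 : Tendsto (fun n : ℕ => ((n:ℝ)+1) / (n + a)) atTop (nhds 1) := by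
        have e1 := (tendsto_natCast_div_add_atTop a)
        have e2 : Tendsto (fun n : ℕ => 1 / ((n:ℝ) + a)) atTop (nhds 0) := by
          refine tendsto_const_nhds.div_atTop ?_
          exact tendsto_atTop_add_const_right _ _ tendsto_natCast_atTop_atTop
        have := e1.add e2
        rw [add_zero] at this
        refine this.congr fun n => ?_
        rw [add_div]
      refine h2.congr fun n => ?_
      rw [wc_succ]
      have := wc_pos ha n
      have h9 : (n:ℝ) + a ≠ 0 := by positivity
      field_simp
    have h3 := ih.mul ((tendsto_add_atTop_iff_nat j).2 h1)
    rw [mul_one] at h3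
    refine h3.congr fun n => ?_
    have := wc_pos ha (n+j)
    have := wc_pos ha (n+j+1)
    rw [← add_assoc]
    field_simp

lemma conv_lo {a b : ℝ} (ha : 0 < a) (hb : 0 < b) {u v : PowerSeries ℝ} {M : ℝ} 
    (hu : ∀ n, |PowerSeries.coeff n u| ≤ M * wc a n)
    (hv : Tendsto (fun n => PowerSeries.coeff n v / wc b n) atTop (nhds 0)) :
    Tendsto (fun n => PowerSeries.coeff n (u * v) / wc (a+b) n) atTop (nhds 0) := by
  have hM : 0 ≤ M := by
    have := (abs_nonneg _).trans (hu 0)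
    simpa [wc_zero] using this
  have hab : 0 < a + b := by positivity
  rw [Metric.tendsto_atTop]
  intro ε hε
  obtain ⟨η, hη, hηε⟩ : ∃ η > 0, M * η < ε / 2 := by
    refine ⟨ε / (2 * (M + 1)) / 2, by positivity, ?_⟩
    have : M * (ε / (2 * (M + 1)) / 2) = (ε / 2) * (M / (2 * (M+1))) := by field_simp
    rw [this]
    have : M / (2 * (M+1)) < 1 := by rw [div_lt_one (by positivity)]; linarith
    nlinarith
  obtain ⟨N, hN⟩ := Metric.tendsto_atTop.1 hv η hη
  have hN' : ∀ j, N ≤ j → |PowerSeries.coeff j v| ≤ η * wc b j := by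
    intro j hj
    have := (hN j hj).le
    rw [Real.dist_eq, sub_zero, abs_div, abs_of_pos (wc_pos hb j), div_le_iff₀ (wc_pos hb j)] at this
    exact this
  have key : ∀ n, N ≤ n → |PowerSeries.coeff n (u * v)| ≤
      M * ∑ j ∈ range N, |PowerSeries.coeff j v| * wc a (n - j) + M * η * wc (a+b) n := by
    intro n hn
    have e1 : wc (a+b) n = ∑ j ∈ range (n+1), wc a (n-j) * wc b j := by
      have := congrArg (PowerSeries.coeff n) (WS_mul b a)
      simp only [WS, PowerSeries.coeff_mul, PowerSeries.coeff_mk] at this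
      rw [add_comm a b, ← this, Finset.Nat.sum_antidiagonal_eq_sum_range_succ (fun i j => wc b i * wc a j)]
      exact sum_congr rfl fun _ _ => mul_comm _ _
    rw [mul_comm u v, PowerSeries.coeff_mul, Finset.Nat.sum_antidiagonal_eq_sum_range_succ
      (fun i j => PowerSeries.coeff i v * PowerSeries.coeff j u)]
    refine (abs_sum_le_sum_abs _ _).trans ?_
    have e2 : ∑ j ∈ range N, |PowerSeries.coeff j v| * wc a (n - j) = 
        ∑ j ∈ range (n+1), if j < N then |PowerSeries.coeff j v| * wc a (n - j) else 0 := by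
      rw [← sum_filter]
      refine sum_congr ?_ fun _ _ => rfl
      ext j; simp; omega
    rw [e1, e2, mul_sum, mul_sum, ← sum_add_distrib]
    refine sum_le_sum fun j _ => ?_
    rw [abs_mul]
    have w1 := wc_pos ha (n-j)
    have w2 := wc_pos hb j
    have := hu (n-j)
    split_ifs with h
    · calc _ ≤ |PowerSeries.coeff j v| * (M * wc a (n-j)) := by gcongr
        _ ≤ _ := by
          have : 0 ≤ M * η * (wc a (n-j) * wc b j) := by positivity
          linarith
    · have h4 := hN' j (not_lt.1 h)
      calc _ ≤ (η * wc b j) * (M * wc a (n-j)) := by gcongr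
        _ = _ := by ring
  have hsm : Tendsto (fun n => M * ∑ j ∈ range N, |PowerSeries.coeff j v| * (wc a (n - j) / wc (a+b) n))
      atTop (nhds 0) := by
    have : Tendsto (fun n => ∑ j ∈ range N, |PowerSeries.coeff j v| * (wc a (n - j) / wc (a+b) n))
      atTop (nhds (∑ j ∈ range N, |PowerSeries.coeff j v| * 0)) := by
      refine tendsto_finsetSum _ fun j _ => Tendsto.const_mul _ ?_
      rw [← tendsto_add_atTop_iff_nat j]
      have := (wc_ratio_zero ha (lt_add_of_pos_right a hb)).mul (wc_shift_ratio hab j)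
      rw [zero_mul] at this
      refine this.congr fun n => ?_
      have w1 := wc_pos hab n
      have w2 := wc_pos hab (n+j)
      rw [Nat.add_sub_cancel]
      field_simp
    simpa using this.const_mul M
  obtain ⟨N2, hN2⟩ := Metric.tendsto_atTop.1 hsm (ε/2) (by positivity)
  refine ⟨max N N2, fun n hn => ?_⟩
  have h1 := key n (le_trans (le_max_left _ _) hn)
  have h2 := hN2 n (le_trans (le_max_right _ _) hn)
  have w := wc_pos hab n
  rw [Real.dist_eq, sub_zero] at h2 ⊢
  rw [abs_div, abs_of_pos w]
  have h3 := (abs_lt.1 h2).2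
  calc _ ≤ (M * ∑ j ∈ range N, |PowerSeries.coeff j v| * wc a (n - j) + M * η * wc (a+b) n) / wc (a+b) n := by
        gcongr
    _ = M * ∑ j ∈ range N, |PowerSeries.coeff j v| * (wc a (n - j) / wc (a+b) n) + M * η := by
        rw [add_div, mul_div_assoc, mul_div_assoc, div_self w.ne', mul_one, sum_div]
        simp only [mul_div_assoc]
    _ < _ := by linarith

lemma conv_main {a b : ℝ} (ha : 0 < a) (hb : 0 < b) {u v : PowerSeries ℝ} {A B : ℝ}
    (hu : Tendsto (fun n => PowerSeries.coeff n u / wc a n) atTop (nhds A))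
    (hv : Tendsto (fun n => PowerSeries.coeff n v / wc b n) atTop (nhds B)) :
    Tendsto (fun n => PowerSeries.coeff n (u * v) / wc (a+b) n) atTop (nhds (A * B)) := by
  have hab : 0 < a + b := by positivity
  obtain ⟨M, hM⟩ : ∃ M, ∀ n, |PowerSeries.coeff n u| ≤ M * wc a n := by
    obtain ⟨M, hM⟩ := hu.abs.bddAbove_range
    refine ⟨M, fun n => ?_⟩
    have := hM ⟨n, rfl⟩
    simp only [abs_div, abs_of_pos (wc_pos ha n)] at this
    rwa [div_le_iff₀ (wc_pos ha n)] at this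
  have h1 : Tendsto (fun n => PowerSeries.coeff n (v - B • WS b) / wc b n) atTop (nhds 0) := by
    have := hv.sub_const B
    rw [sub_self] at this
    refine this.congr fun n => ?_
    have := wc_pos hb n
    simp [WS]
    field_simp
  have h2 : Tendsto (fun n => PowerSeries.coeff n (u - A • WS a) / wc a n) atTop (nhds 0) := by
    have := hu.sub_const A
    rw [sub_self] at this
    refine this.congr fun n => ?_
    have := wc_pos ha n
    simp [WS]
    field_simp
  have h3 := conv_lo ha hb hM h1
  have h4 := conv_lo hb ha (u := WS b) (M := 1) (fun n => by
    simp [WS, abs_of_pos (wc_pos hb n)]) h2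
  have h5 := (h3.add (h4.const_mul B)).add_const (A * B)
  simp only [zero_add, mul_zero] at h5
  refine h5.congr fun n => ?_
  have w := wc_pos hab n
  have e : u * v = u * (v - B • WS b) + B • (WS b * (u - A • WS a)) + (A * B) • WS (a+b) := by
    rw [← WS_mul]
    simp only [PowerSeries.smul_eq_C_mul, map_mul]
    ring
  have e' := congrArg (PowerSeries.coeff n) e
  simp only [map_add, map_smul, smul_eq_mul] at e'
  rw [e', add_comm b a]
  simp only [WS, PowerSeries.coeff_mk]
  field_simp

/-- The linear recursion. -/
lemma rec_asymp {a e α K : ℝ} (ha : 0 < a) (he : a < e) (F g : PowerSeries ℝ)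
    (hg : Tendsto (fun n => PowerSeries.coeff n g / wc (e+1) n) atTop (nhds K))
    (hF : ∀ n : ℕ, ((n:ℝ)+1) * PowerSeries.coeff (n+1) F =
      a * PowerSeries.coeff n (WS 1 * F) + α * PowerSeries.coeff n g) :
    Tendsto (fun n => PowerSeries.coeff n F / wc e n) atTop (nhds (α * K / (e - a))) := by
  have ha1 : 0 < a + 1 := by positivity
  have he0 : 0 < e := ha.trans he
  have he1 : 0 < e + 1 := by positivity
  have hea : 0 < e - a := sub_pos.2 he
  set S : ℕ → ℝ := fun n => PowerSeries.coeff n (WS 1 * F) with hS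
  set L := α * K / (e - a) with hL
  have hSs : ∀ n, S (n+1) = (n + 1 + a) / (n+1) * S n + α * PowerSeries.coeff n g / (n+1) := by
    intro n
    have h1 : ((n:ℝ) + 1) ≠ 0 := by positivity
    have := hF n
    simp only [hS]
    rw [WS_one_mul_succ]
    field_simp
    linarith
  set q : ℕ → ℝ := fun n => wc (e+1) n / wc (a+1) n with hq
  set x : ℕ → ℝ := fun n => S n / wc (a+1) n - L * q n with hx
  have hdq : ∀ n : ℕ, q (n+1) - q n = wc (e+1) n * (e-a) / ((n+1+a) * wc (a+1) n) := by
    intro n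
    simp only [hq]
    rw [wc_succ, wc_succ]
    have := wc_pos ha1 n
    have h1 : ((n:ℝ) + 1) ≠ 0 := by positivity
    have h2 : (n:ℝ) + 1 + a ≠ 0 := by positivity
    have h3 : (n:ℝ) + (a + 1) ≠ 0 := by positivity
    field_simp
    ring
  have hdx : ∀ n : ℕ, x (n+1) - x n = (q (n+1) - q n) * 
      (α * (PowerSeries.coeff n g / wc (e+1) n) / (e - a) - L) := by
    intro n
    have : x (n+1) - x n = (S (n+1) / wc (a+1) (n+1) - S n / wc (a+1) n) - L * (q (n+1) - q n) := by
      simp only [hx]; ring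
    rw [this, hdq, hSs, wc_succ (a+1)]
    have := wc_pos ha1 n
    have := wc_pos he1 n
    have h1 : ((n:ℝ) + 1) ≠ 0 := by positivity
    have h2 : (n:ℝ) + 1 + a ≠ 0 := by positivity
    have h3 : (n:ℝ) + (a + 1) ≠ 0 := by positivity
    field_simp
    ring
  have hlo : (fun n => x (n+1) - x n) =o[atTop] (fun n => q (n+1) - q n) := by
    have : Tendsto (fun n => α * (PowerSeries.coeff n g / wc (e+1) n) / (e - a) - L) atTop (nhds 0) := by
      have := ((hg.const_mul α).div_const (e - a)).sub_const L
      rwa [hL, sub_self] at this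
    have h2 := (isBigO_refl (fun n => q (n+1) - q n) atTop).mul_isLittleO
      ((isLittleO_one_iff ℝ).2 this)
    simp only [mul_one] at h2
    exact h2.congr_left fun n => (hdx n).symm
  have hqtop : Tendsto q atTop atTop := wc_ratio_top ha1 (by linarith)
  have hsum := hlo.sum_range (fun n => by
      show 0 ≤ q (n+1) - q n
      rw [hdq]
      have := wc_pos ha1 n
      have := wc_pos he1 n
      positivity) (by
      simp only [sum_range_sub]
      exact tendsto_atTop_add_const_right _ _ hqtop)
  simp only [sum_range_sub] at hsum
  have hxq : Tendsto (fun n => x n / q n) atTop (nhds 0) := by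
    have c1 : ∀ c : ℝ, (fun _ : ℕ => c) =o[atTop] q := fun c =>
      isLittleO_const_left.2 (Or.inr (tendsto_norm_atTop_atTop.comp hqtop))
    have h1 : (fun n => q n - q 0) =O[atTop] q := (isBigO_refl q _).sub (c1 _).isBigO
    have h2 := (hsum.trans_isBigO h1).add (c1 (x 0))
    simp only [sub_add_cancel] at h2
    exact h2.tendsto_div_nhds_zero
  have hSlim : Tendsto (fun n => S n / wc (e+1) n) atTop (nhds L) := by
    have := hxq.add_const L
    rw [zero_add] at this
    refine this.congr fun n => ?_
    have := wc_pos ha1 n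
    have := wc_pos he1 n
    simp only [hx, hq]
    field_simp
    ring
  rw [← tendsto_add_atTop_iff_nat 1]
  have := ((hSlim.const_mul a).add (hg.const_mul α)).div_const e
  have e1 : (a * L + α * K) / e = L := by
    rw [hL]; field_simp; ring
  rw [e1] at this
  refine this.congr fun n => ?_
  rw [wc_shift]
  have w := wc_pos he1 n
  have h1 : ((n:ℝ) + 1) ≠ 0 := by positivity
  have : PowerSeries.coeff (n+1) F = (a * S n + α * PowerSeries.coeff n g) / (n+1) := by
    rw [eq_div_iff h1, ← hF n]; ring
  rw [this]
  field_simp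

def Asym (β a : ℝ) (P : PowerSeries (PowerSeries ℝ)) (c : PowerSeries ℝ) : Prop :=
  ∀ i, Tendsto (fun n => PowerSeries.coeff n (PowerSeries.coeff i P) / wc (a + i * β) n) atTop
    (nhds (PowerSeries.coeff i c))

lemma Asym.mul {β a a' : ℝ} (hβ : 0 < β) (ha : 0 < a) (ha' : 0 < a')
    {P P' : PowerSeries (PowerSeries ℝ)} {c c' : PowerSeries ℝ}
    (h : Asym β a P c) (h' : Asym β a' P' c') : Asym β (a + a') (P * P') (c * c') := by
  intro k
  rw [PowerSeries.coeff_mul, PowerSeries.coeff_mul]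
  simp only [map_sum, sum_div]
  refine tendsto_finsetSum _ fun x hx => ?_
  rw [HasAntidiagonal.mem_antidiagonal] at hx
  have := conv_main (a := a + x.1 * β) (b := a' + x.2 * β) (by positivity) (by positivity) (h x.1) (h' x.2)
  have e : a + x.1 * β + (a' + x.2 * β) = a + a' + k * β := by
    rw [← hx]; push_cast; ring
  rwa [e] at this

lemma Asym.pow {β a : ℝ} (hβ : 0 < β) (ha : 0 < a)
    {P : PowerSeries (PowerSeries ℝ)} {c : PowerSeries ℝ}
    (h : Asym β a P c) (m : ℕ) : Asym β ((m + 1 : ℕ) * a) (P ^ (m+1)) (c ^ (m+1)) := by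
  induction m with
  | zero => simpa using h
  | succ m ih =>
    rw [pow_succ, pow_succ]
    have := ih.mul hβ (by positivity) ha h
    have e : ((m+1:ℕ):ℝ) * a + a = ((m+1+1:ℕ):ℝ) * a := by push_cast; ring
    rwa [e] at this

/-- `e^t` as series in `t` with constant coefficients -/
noncomputable def ES : PowerSeries (PowerSeries ℝ) :=
  PowerSeries.mk fun k => PowerSeries.C (1 / (k.factorial : ℝ))

lemma Asym.exp_mul {β a : ℝ} (hβ : 0 < β) (ha : 0 < a)
    {P : PowerSeries (PowerSeries ℝ)} {c : PowerSeries ℝ}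
    (h : Asym β a P c) : Asym β a (ES * P) c := by
  intro k
  rw [PowerSeries.coeff_mul]
  simp only [map_sum, sum_div]
  have : PowerSeries.coeff k c = ∑ x ∈ antidiagonal k, if x = (0, k) then PowerSeries.coeff k c else 0 := by
    rw [Finset.sum_ite_eq']; simp
  rw [this]
  refine tendsto_finsetSum _ fun x hx => ?_
  rw [HasAntidiagonal.mem_antidiagonal] at hx
  simp only [ES, PowerSeries.coeff_mk, PowerSeries.coeff_C_mul]
  split_ifs with h0
  · subst h0
    simpa using h k
  · have hlt : x.2 < k := by
      rcases x with ⟨i, j⟩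
      simp only [Prod.mk.injEq, not_and] at h0 hx ⊢
      by_contra hcon
      have : i = 0 := by omega
      subst this
      exact h0 rfl (by omega)
    have hlt' : (x.2 : ℝ) < k := by exact_mod_cast hlt
    have p1 : 0 < a + x.2 * β := by positivity
    have p2 : 0 < a + k * β := by positivity
    have := ((h x.2).mul (wc_ratio_zero p1 (b := a + k * β) (by nlinarith))).const_mul
      (1 / (x.1.factorial : ℝ))
    rw [mul_zero, mul_zero] at this
    refine this.congr fun n => ?_
    have w1 := wc_pos p1 n
    have w2 := wc_pos p2 n
    field_simp

/-- truncation below `k`. -/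
noncomputable def tr {R : Type*} [CommRing R] (k : ℕ) (P : PowerSeries R) : PowerSeries R :=
  PowerSeries.mk fun i => if i < k then PowerSeries.coeff i P else 0

lemma coeff_mul_congr {R : Type*} [CommRing R] {P P' Q Q' : PowerSeries R} {n : ℕ}
    (h : ∀ i ≤ n, PowerSeries.coeff i P = PowerSeries.coeff i P')
    (h' : ∀ i ≤ n, PowerSeries.coeff i Q = PowerSeries.coeff i Q') :
    ∀ i ≤ n, PowerSeries.coeff i (P * Q) = PowerSeries.coeff i (P' * Q') := by
  intro i hi
  rw [PowerSeries.coeff_mul, PowerSeries.coeff_mul]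
  refine sum_congr rfl fun x hx => ?_
  rw [HasAntidiagonal.mem_antidiagonal] at hx
  rw [h _ (by omega), h' _ (by omega)]

lemma coeff_pow_congr {R : Type*} [CommRing R] {P P' : PowerSeries R} {n : ℕ}
    (h : ∀ i ≤ n, PowerSeries.coeff i P = PowerSeries.coeff i P') (m : ℕ) :
    ∀ i ≤ n, PowerSeries.coeff i (P ^ m) = PowerSeries.coeff i (P' ^ m) := by
  induction m with
  | zero => simp
  | succ m ih => 
    rw [pow_succ, pow_succ]
    exact coeff_mul_congr ih h

lemma split_top {R : Type*} [CommRing R] (E Y : PowerSeries R) (k d : ℕ) (hk : 1 ≤ k)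
    (hE : PowerSeries.coeff 0 E = 1) :
    PowerSeries.coeff k (E * Y ^ d) = PowerSeries.coeff k (E * (tr k Y) ^ d)
      + d * (PowerSeries.coeff 0 Y) ^ (d-1) * PowerSeries.coeff k Y := by
  set Z := tr k Y + PowerSeries.C (PowerSeries.coeff k Y) * PowerSeries.X ^ k with hZ
  have h1 : ∀ i ≤ k, PowerSeries.coeff i Y = PowerSeries.coeff i Z := by
    intro i hi
    simp only [hZ, tr, map_add, PowerSeries.coeff_mk, PowerSeries.coeff_C_mul, PowerSeries.coeff_X_pow]
    rcases hi.lt_or_eq with h | h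
    · simp [h, h.ne]
    · simp [h]
  have h2 := coeff_mul_congr (P := E) (fun i _ => rfl) (coeff_pow_congr h1 d) k le_rfl
  rw [h2]
  obtain ⟨q, hq⟩ := Polynomial.powAddExpansion (tr k Y) (PowerSeries.C (PowerSeries.coeff k Y) * PowerSeries.X ^ k) d
  rw [hZ, hq]
  have e : E * ((tr k Y) ^ d + (d : PowerSeries R) * (tr k Y) ^ (d-1) * (PowerSeries.C (PowerSeries.coeff k Y) * PowerSeries.X ^ k) 
      + q * (PowerSeries.C (PowerSeries.coeff k Y) * PowerSeries.X ^ k)^2)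
    = E * (tr k Y) ^ d + PowerSeries.X ^ k * (E * (d : PowerSeries R) * (tr k Y) ^ (d-1) * PowerSeries.C (PowerSeries.coeff k Y)
      + PowerSeries.X ^ k * (E * q * (PowerSeries.C (PowerSeries.coeff k Y))^2)) := by ring
  rw [e, map_add, PowerSeries.coeff_X_pow_mul', if_pos le_rfl, Nat.sub_self, map_add,
    PowerSeries.coeff_X_pow_mul', if_neg (by omega), add_zero]
  congr 1
  rw [PowerSeries.coeff_zero_eq_constantCoeff] at hE ⊢
  simp only [map_mul, map_pow, hE, PowerSeries.constantCoeff_C, map_natCast]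
  have : PowerSeries.constantCoeff (tr k Y) = PowerSeries.constantCoeff Y := by
    rw [← PowerSeries.coeff_zero_eq_constantCoeff_apply, ← PowerSeries.coeff_zero_eq_constantCoeff_apply]
    simp only [tr, PowerSeries.coeff_mk, if_pos (show 0 < k by omega)]
  rw [this]
  ring

theorem abstract_main (d : ℕ) (hd : 2 ≤ d) (p α β : ℝ) (hα : α = 1 / ((d:ℝ) - 1)) 
    (hβ : β = (p * d - 1) * α) (hpd : 0 < p * d - 1) 
    (F : ℕ → PowerSeries ℝ) (hF0 : ∀ k, 1 ≤ k → PowerSeries.coeff 0 (F k) = 0)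
    (Y : PowerSeries (PowerSeries ℝ)) (hY0 : PowerSeries.coeff 0 Y = WS α)
    (hYk : ∀ k, 1 ≤ k → PowerSeries.coeff k Y = p • F k)
    (hrec : ∀ k, 1 ≤ k → ∀ n : ℕ, ((n:ℝ) + 1) * PowerSeries.coeff (n+1) (F k)
      = α * PowerSeries.coeff n (PowerSeries.coeff k (ES * Y ^ d)))
    (c : ℕ → ℝ) (C : PowerSeries ℝ) (hC0 : PowerSeries.coeff 0 C = 1)
    (hCk : ∀ k, 1 ≤ k → PowerSeries.coeff k C = p * c k)
    (hc1 : c 1 = 1 / (p * d - 1))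
    (hck : ∀ k : ℕ, 2 ≤ k → ((k:ℝ) - 1) * (p * d - 1) * c k = PowerSeries.coeff k ((tr k C) ^ d))
    (k : ℕ) (hk : 1 ≤ k) :
    Tendsto (fun n => PowerSeries.coeff n (F k) / wc (α + k * β) n) atTop (nhds (c k)) := by
  have hd1 : 0 < (d:ℝ) - 1 := by
    have : (2:ℝ) ≤ d := by exact_mod_cast hd
    linarith
  have hα0 : 0 < α := by rw [hα]; positivity
  have hβ0 : 0 < β := by rw [hβ]; positivity
  have hdα : (d:ℝ) * α = α + 1 := by rw [hα]; field_simp; ring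
  have hdα' : ((d:ℝ)-1) * α = 1 := by rw [hα]; field_simp
  obtain ⟨e, rfl⟩ : ∃ e, d = e + 2 := ⟨d - 2, by omega⟩
  have hES : PowerSeries.coeff 0 ES = 1 := by simp [ES]
  have hW1 : (WS α)^(e + 2 - 1) = WS 1 := by
    have : e + 2 - 1 = e + 1 := by omega
    rw [this, WS_pow]; congr 1
    push_cast at hdα'; linarith
  have hrec2 : ∀ k, 1 ≤ k → ∀ n : ℕ, ((n:ℝ) + 1) * PowerSeries.coeff (n+1) (F k)
      = (α + β) * PowerSeries.coeff n (WS 1 * F k)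
       + α * PowerSeries.coeff n (PowerSeries.coeff k (ES * (tr k Y) ^ (e+2))) := by
    intro k hk n
    rw [hrec k hk n, split_top ES Y k (e+2) hk hES, hY0, hW1, hYk k hk]
    have : ((e + 2 : ℕ) : PowerSeries ℝ) * WS 1 * p • F k = (((e+2:ℕ):ℝ) * p) • (WS 1 * F k) := by
      rw [PowerSeries.smul_eq_C_mul, PowerSeries.smul_eq_C_mul, map_mul, map_natCast]; ring
    rw [this, map_add, map_smul, smul_eq_mul, hβ]
    ring
  induction k using Nat.strong_induction_on with
  | _ k ih =>
  rcases hk.lt_or_eq with hk2 | hk1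
  · -- k ≥ 2
    have hA : Asym β α (tr k Y) (tr k C) := by
      intro i
      simp only [tr, PowerSeries.coeff_mk]
      split_ifs with hi
      · rcases Nat.eq_zero_or_pos i with h0 | h0
        · subst h0
          rw [hY0, hC0]
          refine tendsto_const_nhds.congr fun n => ?_
          have := wc_pos hα0 n
          simp [WS, this.ne']
        · rw [hYk i h0, hCk i h0]
          have := (ih i hi h0).const_mul p
          refine this.congr fun n => ?_
          simp [mul_div_assoc]
      · simp
    have hB := (hA.pow hβ0 hα0 (e+1)).exp_mul hβ0 (by positivity) k
    have e1 : ((e+1+1:ℕ):ℝ) * α + k * β = α + k * β + 1 := by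
      have : ((e+1+1:ℕ):ℝ) * α = α + 1 := hdα
      rw [this]; ring
    rw [e1] at hB
    have hk2' : (1:ℝ) < k := by exact_mod_cast hk2
    have := rec_asymp (a := α + β) (e := α + k * β) (α := α) (by positivity) (by nlinarith) (F k) _ hB
      (hrec2 k hk)
    convert this using 2
    have hh := hck k hk2
    have : PowerSeries.coeff k (tr k C ^ (e + 1 + 1)) = ((k:ℝ) - 1) * (p * (e+2:ℕ) - 1) * c k := hh.symm
    rw [this, eq_div_iff (by nlinarith), hβ]
    ring
  · -- k = 1
    subst hk1
    have e0 : PowerSeries.coeff 1 (ES * (tr 1 Y) ^ (e+2)) = WS (α+1) := by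
      have : tr 1 Y = PowerSeries.C (WS α) := by
        ext i : 1
        simp only [tr, PowerSeries.coeff_mk, PowerSeries.coeff_C, Nat.lt_one_iff]
        split_ifs with h
        · rw [h, hY0]
        · rfl
      rw [this, ← map_pow, PowerSeries.coeff_mul_C]
      have : (WS α)^(e+2) = WS (α + 1) := by
        rw [WS_pow]; congr 1
        push_cast at hdα ⊢; linarith
      rw [this]
      simp [ES]
    have hr := hrec2 1 le_rfl
    rw [e0] at hr
    set G : PowerSeries ℝ := c 1 • (WS (α + β) - WS α) with hG
    have hrG : ∀ n : ℕ, ((n:ℝ) + 1) * PowerSeries.coeff (n+1) G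
      = (α + β) * PowerSeries.coeff n (WS 1 * G) + α * PowerSeries.coeff n (WS (α+1)) := by
      intro n
      have : WS 1 * G = c 1 • (WS (α + β + 1) - WS (α + 1)) := by
        rw [hG, mul_smul_comm, mul_sub, WS_mul, WS_mul, add_comm 1, add_comm 1]
      rw [this]
      simp only [hG, map_smul, map_sub, smul_eq_mul, WS, PowerSeries.coeff_mk]
      rw [wc_shift, wc_shift, hc1, hβ]
      have h1 : ((n:ℝ) + 1) ≠ 0 := by positivity
      field_simp
      ring
    have hFG : ∀ n, PowerSeries.coeff n (F 1) = PowerSeries.coeff n G := by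
      intro n
      induction n using Nat.strong_induction_on with
      | _ n ihn =>
      rcases n with _ | n
      · rw [hF0 1 le_rfl]; simp [hG, WS, wc_zero]
      · have h1 : ((n:ℝ) + 1) ≠ 0 := by positivity
        apply mul_left_cancel₀ h1
        rw [hr, hrG]
        rw [coeff_mul_congr (P := WS 1) (fun i _ => rfl) (fun i hi => ihn i (by omega)) n le_rfl]
    have := ((wc_ratio_zero hα0 (b := α + β) (by linarith)).const_sub 1).const_mul (c 1)
    rw [sub_zero, mul_one] at this
    refine this.congr fun n => ?_
    have w := wc_pos (show 0 < α + β by positivity) n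
    rw [hFG]
    simp only [hG, map_smul, map_sub, smul_eq_mul, WS, PowerSeries.coeff_mk, Nat.cast_one, one_mul]
    field_simp

lemma bell_coeff (k j : ℕ) (hjk : j ≤ k) (D : ℕ → ℝ) (T : PowerSeries ℝ)
    (h0 : PowerSeries.coeff 0 T = 0)
    (hT : ∀ i, 1 ≤ i → i ≤ k - j + 1 → PowerSeries.coeff i T = D i / (i.factorial : ℝ)) :
    (j.factorial : ℝ) * bellPartial k j D = k.factorial * PowerSeries.coeff k (T ^ j) := by
  obtain ⟨T', rfl⟩ : PowerSeries.X ∣ T := by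
    rw [PowerSeries.X_dvd_iff, ← PowerSeries.coeff_zero_eq_constantCoeff_apply, h0]
  set Q : PowerSeries ℝ := ∑ i : Fin (k - j + 1),
    PowerSeries.monomial (i:ℕ) (D ((i:ℕ)+1) / ((((i:ℕ)+1).factorial : ℕ):ℝ)) with hQ
  have hTQ : ∀ i ≤ k - j, PowerSeries.coeff i T' = PowerSeries.coeff i Q := by
    intro i hi
    have := hT (i+1) (by omega) (by omega)
    rw [PowerSeries.coeff_succ_X_mul] at this
    rw [this, hQ, map_sum, Finset.sum_eq_single (⟨i, by omega⟩ : Fin (k - j + 1))]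
    · simp
    · intro b _ hb
      rw [PowerSeries.coeff_monomial, if_neg]
      intro h; apply hb; ext; exact h.symm
    · simp
  rw [mul_pow, PowerSeries.coeff_X_pow_mul', if_pos hjk, coeff_pow_congr hTQ j _ le_rfl, hQ,
    Finset.sum_pow_eq_sum_piAntidiag]
  simp only [PowerSeries.monomial_pow, PowerSeries.prod_monomial, map_sum]
  have hterm : ∀ m : Fin (k-j+1) → ℕ, PowerSeries.coeff (k-j)
      ((Nat.multinomial univ m : PowerSeries ℝ) * PowerSeries.monomial (∑ i : Fin (k-j+1), m i * (i:ℕ))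
        (∏ i : Fin (k-j+1), (D ((i:ℕ)+1) / ((((i:ℕ)+1).factorial : ℕ):ℝ)) ^ m i)) = 
      if ∑ i : Fin (k-j+1), (i:ℕ) * m i = k - j then (Nat.multinomial univ m : ℝ) * 
         ∏ i : Fin (k-j+1), (D ((i:ℕ)+1) / ((((i:ℕ)+1).factorial : ℕ):ℝ)) ^ m i else 0 := by
    intro m
    have : (Nat.multinomial univ m : PowerSeries ℝ) = PowerSeries.C (Nat.multinomial univ m : ℝ) := by simp
    rw [this, PowerSeries.coeff_C_mul, PowerSeries.coeff_monomial]
    simp only [mul_comm (m _) _]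
    by_cases h : ∑ i : Fin (k-j+1), (i:ℕ) * m i = k - j
    · simp [h]
    · rw [if_neg h, if_neg (fun h' => h h'.symm), mul_zero]
  simp only [hterm]
  rw [← Finset.sum_filter, bellPartial, mul_sum, mul_sum]
  have hs : ∀ m : Fin (k-j+1) → ℕ, ∑ i : Fin (k-j+1), ((i:ℕ)+1) * m i = ∑ i : Fin (k-j+1), (i:ℕ) * m i + ∑ i, m i := by
    intro m
    rw [← sum_add_distrib]; exact sum_congr rfl fun _ _ => by ring
  refine Finset.sum_congr ?_ ?_
  · ext m
    simp only [mem_filter, Fintype.mem_piFinset, mem_range, Finset.mem_piAntidiag, hs]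
    constructor
    · rintro ⟨_, h1, h2⟩
      exact ⟨⟨h2, fun _ _ => mem_univ _⟩, by omega⟩
    · rintro ⟨⟨h2, _⟩, h1⟩
      replace h2 : ∑ i, m i = j := h2
      refine ⟨fun i => ?_, by omega, h2⟩
      have : m i ≤ ∑ i, m i := Finset.single_le_sum (f := m) (fun _ _ => Nat.zero_le _) (mem_univ i)
      omega
  · intro m hm
    simp only [mem_filter, Finset.mem_piAntidiag] at hm
    have hmul := Nat.multinomial_spec (univ : Finset (Fin (k-j+1))) m
    rw [hm.1.1] at hmul
    have hmul' : (∏ i, ((m i).factorial : ℝ)) * (Nat.multinomial univ m : ℝ) = j.factorial := by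
      exact_mod_cast hmul
    rw [← hmul']
    simp only [div_pow, prod_div_distrib, prod_mul_distrib]
    have h1 : (∏ i, ((m i).factorial : ℝ)) ≠ 0 := Finset.prod_ne_zero_iff.2 fun i _ => by positivity
    have h2 : (∏ i : Fin (k-j+1), ((((i:ℕ)+1).factorial : ℕ) : ℝ) ^ (m i)) ≠ 0 := Finset.prod_ne_zero_iff.2 fun i _ => by positivity
    field_simp

lemma c_rec (d : ℕ) (p : ℝ) (D : ℕ → ℝ) (C : PowerSeries ℝ) (hC0 : PowerSeries.coeff 0 C = 1)
    (hCk : ∀ k, 1 ≤ k → PowerSeries.coeff k C = p * (D k / (k.factorial : ℝ))) (k : ℕ) (hk : 2 ≤ k) :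
    ∑ j ∈ Finset.Icc 2 (min k d), p ^ j * ((d.factorial : ℝ) / ((d - j).factorial : ℝ)) * bellPartial k j D
     = k.factorial * PowerSeries.coeff k ((tr k C) ^ d) := by
  set T : PowerSeries ℝ := tr k (PowerSeries.mk fun i => if i = 0 then 0 else D i / (i.factorial : ℝ)) with hT
  have hT0 : PowerSeries.coeff 0 T = 0 := by simp [hT, tr]
  have hTk : PowerSeries.coeff k T = 0 := by simp [hT, tr]
  have e : tr k C = PowerSeries.C p * T + 1 := by
    ext i
    simp only [hT, tr, PowerSeries.coeff_mk, map_add, PowerSeries.coeff_C_mul, PowerSeries.coeff_one]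
    rcases Nat.eq_zero_or_pos i with h | h
    · subst h; simp [hC0]; omega
    · rw [hCk i h]
      simp [h.ne']
  rw [e, add_pow, map_sum, mul_sum]
  have hsub : Finset.Icc 2 (min k d) ⊆ Finset.range (d+1) := by
    intro j hj; simp at hj ⊢; omega
  rw [← Finset.sum_subset hsub]
  · refine sum_congr rfl fun j hj => ?_
    simp only [mem_Icc, le_min_iff] at hj
    have hb := bell_coeff k j hj.2.1 D T hT0 (by
      intro i h1 h2
      simp only [hT, tr, PowerSeries.coeff_mk]
      rw [if_pos (by omega), if_neg (by omega)])
    have : (PowerSeries.C p * T) ^ j * 1 ^ (d - j) * ((d.choose j : ℕ) : PowerSeries ℝ)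
      = PowerSeries.C (p ^ j * (d.choose j : ℝ)) * T ^ j := by
      rw [one_pow, mul_one, mul_pow, map_mul, map_pow, map_natCast]; ring
    rw [this, PowerSeries.coeff_C_mul, Nat.cast_choose ℝ hj.2.2]
    have f1 : (j.factorial : ℝ) ≠ 0 := by positivity
    have : PowerSeries.coeff k (T^j) = j.factorial * bellPartial k j D / k.factorial := by
      rw [hb]; field_simp
    rw [this]
    field_simp
  · intro j hj hj2
    have : (PowerSeries.C p * T) ^ j * 1 ^ (d - j) * ((d.choose j : ℕ) : PowerSeries ℝ)
      = PowerSeries.C (p ^ j * (d.choose j : ℝ)) * T ^ j := by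
      rw [one_pow, mul_one, mul_pow, map_mul, map_pow, map_natCast]; ring
    rw [this, PowerSeries.coeff_C_mul]
    suffices h : PowerSeries.coeff k (T^j) = 0 by rw [h]; simp
    simp only [mem_range, mem_Icc, le_min_iff] at hj hj2
    by_cases h0 : j = 0
    · subst h0; simp [PowerSeries.coeff_one]; omega
    by_cases h1 : j = 1
    · subst h1; simpa using hTk
    obtain ⟨T', hT'⟩ : PowerSeries.X ∣ T := by
      rw [PowerSeries.X_dvd_iff, ← PowerSeries.coeff_zero_eq_constantCoeff_apply, hT0]
    rw [hT', mul_pow, PowerSeries.coeff_X_pow_mul', if_neg (by omega)]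

lemma r_vanish {p : ℝ} {φ : ℕ → ℝ} {r : ℕ → ℕ → ℝ} {b : ℕ → ℝ} (h : clusterRec p φ r b) :
    ∀ n k : ℕ, 1 ≤ n → n < k → r n k = 0 := by
  intro n
  induction n using Nat.strong_induction_on with
  | _ n ih =>
  intro k hn hk
  rw [h.2 n k hn (by omega)]
  refine sum_eq_zero fun δ hδ => sum_eq_zero fun s _ => ?_
  refine mul_eq_zero_of_right _ (sum_eq_zero fun f hf => mul_eq_zero_of_right _ (sum_eq_zero fun g hg => ?_))
  simp only [mem_filter, Finset.Nat.mem_antidiagonalTuple] at hf hg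
  have hs : s.1 ≤ δ := Nat.lt_succ_iff.mp (Finset.mem_range.mp s.2)
  have hle : ∑ i : Fin s.1, f (Fin.castLE hs i) ≤ ∑ i, f i := by
    have := Finset.sum_map (univ : Finset (Fin s.1)) (Fin.castLEEmb hs) f
    simp only [Fin.castLEEmb_apply] at this
    rw [← this]
    exact Finset.sum_le_sum_of_subset (subset_univ _)
  obtain ⟨i, hi⟩ : ∃ i : Fin s.1, f (Fin.castLE hs i) < g i := by
    by_contra hcon
    push Not at hcon
    have := Finset.sum_le_sum (s := univ) fun i _ => hcon i
    omega
  have hfn : f (Fin.castLE hs i) ≤ ∑ i, f i := Finset.single_le_sum (f := f) (fun _ _ => Nat.zero_le _) (mem_univ _)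
  have h0 : r (f (Fin.castLE hs i)) (g i) = 0 := ih _ (by omega) _ (hf.2 _) hi
  rw [mul_eq_zero]; left; rw [mul_eq_zero]; right
  exact Finset.prod_eq_zero (mem_univ i) h0

section comb
variable {A : Type*} [CommRing A] [Algebra ℝ A]

noncomputable def rho (r : ℕ → ℕ → ℝ) (e : A) (n : ℕ) : A := ∑ j ∈ Finset.Icc 1 n, algebraMap ℝ A (r n j) * e ^ j

noncomputable def RS (c : ℝ) (r : ℕ → ℕ → ℝ) (e : A) : PowerSeries A :=
  PowerSeries.mk fun n => algebraMap ℝ A (c ^ n / (n.factorial : ℝ)) * rho r e n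

noncomputable def BS (A : Type*) [CommRing A] [Algebra ℝ A] (c : ℝ) (b : ℕ → ℝ) : PowerSeries A :=
  PowerSeries.mk fun n => algebraMap ℝ A (c ^ n / (n.factorial : ℝ) * b n)

lemma prod_rho {r : ℕ → ℕ → ℝ} (hr : ∀ n k : ℕ, 1 ≤ n → n < k → r n k = 0) (e : A)
    (s N : ℕ) (f : Fin s → ℕ) (hf : ∀ i, 1 ≤ f i) (hN : ∑ i, f i ≤ N) :
    ∑ k ∈ range (N+1), algebraMap ℝ A
      (∑ g ∈ (Finset.Nat.antidiagonalTuple s k).filter (fun g => ∀ i, 1 ≤ g i), ∏ i, r (f i) (g i)) * e ^ k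
    = ∏ i, rho r e (f i) := by
  simp only [rho]
  rw [Finset.prod_univ_sum, ← Finset.sum_fiberwise_of_maps_to (t := range (N+1)) (g := fun g : Fin s → ℕ => ∑ i, g i)]
  · refine sum_congr rfl fun k _ => ?_
    rw [map_sum, sum_mul]
    symm
    have : ∀ g ∈ (Fintype.piFinset fun i => Icc 1 (f i)).filter (fun g : Fin s → ℕ => ∑ i, g i = k),
        ∏ i, (algebraMap ℝ A (r (f i) (g i)) * e ^ (g i)) = algebraMap ℝ A (∏ i, r (f i) (g i)) * e ^ k := by
      intro g hg
      rw [mem_filter] at hg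
      rw [prod_mul_distrib, Finset.prod_pow_eq_pow_sum, hg.2, map_prod]
    rw [sum_congr rfl this]
    apply Finset.sum_subset
    · intro g
      simp only [mem_filter, Fintype.mem_piFinset, mem_Icc, Finset.Nat.mem_antidiagonalTuple]
      exact fun h => ⟨h.2, fun i => (h.1 i).1⟩
    · intro g
      simp only [mem_filter, Fintype.mem_piFinset, mem_Icc, Finset.Nat.mem_antidiagonalTuple]
      rintro ⟨h1, h2⟩ h3
      obtain ⟨i, hi⟩ : ∃ i, f i < g i := by
        by_contra hcon
        push Not at hcon
        exact h3 ⟨fun i => ⟨h2 i, hcon i⟩, h1⟩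
      rw [Finset.prod_eq_zero (mem_univ i) (hr _ _ (hf i) hi), map_zero, zero_mul]
  · intro g hg
    simp only [Fintype.mem_piFinset, mem_Icc] at hg
    have := Finset.sum_le_sum (s := univ) fun i _ => (hg i).2
    rw [mem_range]
    omega

lemma prod_lt {M : Type*} [CommMonoid M] {s δ : ℕ} (hs : s ≤ δ) (h : Fin δ → M) :
    ∏ i ∈ univ.filter (fun j : Fin δ => (j:ℕ) < s), h i = ∏ i : Fin s, h (Fin.castLE hs i) := by
  have := Finset.prod_map (univ : Finset (Fin s)) (Fin.castLEEmb hs) h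
  simp only [Fin.castLEEmb_apply] at this
  rw [← this]
  congr 1
  ext j
  simp only [mem_filter, mem_univ, true_and, Finset.mem_map, Fin.castLEEmb_apply]
  constructor
  · intro hj; exact ⟨⟨j, hj⟩, by ext; simp⟩
  · rintro ⟨i, rfl⟩; simp

lemma coeff_prod_tuple {A : Type*} [CommRing A] (δ n : ℕ) (P : Fin δ → PowerSeries A) :
    PowerSeries.coeff n (∏ i, P i) = ∑ f ∈ Finset.Nat.antidiagonalTuple δ n, ∏ i, PowerSeries.coeff (f i) (P i) := by
  rw [PowerSeries.coeff_prod]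
  refine Finset.sum_nbij' (fun l => ⇑l) (fun f => Finsupp.equivFunOnFinite.symm f) ?_ ?_ ?_ ?_ ?_
  · intro l hl
    rw [Finset.Nat.mem_antidiagonalTuple]
    exact (Finset.mem_finsuppAntidiag.1 hl).1
  · intro f hf
    rw [Finset.Nat.mem_antidiagonalTuple] at hf
    rw [Finset.mem_finsuppAntidiag]
    exact ⟨by simpa using hf, by simp⟩
  · intro l _; ext; simp
  · intro f _; rfl
  · intro l _; rfl

lemma term_lemma {r : ℕ → ℕ → ℝ} {b : ℕ → ℝ} (hr : ∀ n k : ℕ, 1 ≤ n → n < k → r n k = 0) (hb0 : b 0 = 0)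
    (p c : ℝ) (e : A) (n δ s : ℕ) (hs : s ≤ δ) :
    algebraMap ℝ A (c ^ n / (n.factorial : ℝ)) * ∑ k ∈ range (n+1), algebraMap ℝ A
      (∑ f ∈ (Finset.Nat.antidiagonalTuple δ n).filter (fun f => ∀ i, 1 ≤ f i),
            ((n.factorial : ℝ) / ∏ i, ((f i).factorial : ℝ)) *
              ∑ g ∈ (Finset.Nat.antidiagonalTuple s k).filter (fun g => ∀ i, 1 ≤ g i),
                p ^ s * (1 - p) ^ (δ - s) *
                  (∏ i : Fin s, r (f (Fin.castLE hs i)) (g i)) *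
                  ∏ j ∈ Finset.univ.filter (fun j : Fin δ => s ≤ (j : ℕ)), b (f j)) * e ^ k
    = PowerSeries.coeff n ((PowerSeries.C (algebraMap ℝ A p) * RS c r e) ^ s *
        (PowerSeries.C (algebraMap ℝ A (1-p)) * BS A c b) ^ (δ - s)) := by
  set P : Fin δ → PowerSeries A := fun i => if (i:ℕ) < s then PowerSeries.C (algebraMap ℝ A p) * RS c r e
    else PowerSeries.C (algebraMap ℝ A (1-p)) * BS A c b with hP
  have hcard1 : (univ.filter (fun j : Fin δ => (j:ℕ) < s)).card = s := by
    have := prod_lt hs (fun _ => Multiplicative.ofAdd (1:ℕ))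
    rw [prod_const, prod_const, ← ofAdd_nsmul, ← ofAdd_nsmul] at this
    simpa using this
  have hcard2 : (univ.filter (fun j : Fin δ => ¬ (j:ℕ) < s)).card = δ - s := by
    have := Finset.card_filter_add_card_filter_not (s := (univ : Finset (Fin δ))) (fun j : Fin δ => (j:ℕ) < s)
    rw [card_univ, Fintype.card_fin] at this
    omega
  have e1 : (PowerSeries.C (algebraMap ℝ A p) * RS c r e) ^ s *
        (PowerSeries.C (algebraMap ℝ A (1-p)) * BS A c b) ^ (δ - s) = ∏ i, P i := by
    rw [hP, Finset.prod_ite, prod_const, prod_const, hcard1, hcard2]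
  rw [e1, coeff_prod_tuple]
  have e2 : ∑ f ∈ Finset.Nat.antidiagonalTuple δ n, ∏ i, PowerSeries.coeff (f i) (P i)
     = ∑ f ∈ (Finset.Nat.antidiagonalTuple δ n).filter (fun f => ∀ i, 1 ≤ f i), ∏ i, PowerSeries.coeff (f i) (P i) := by
    symm
    apply Finset.sum_subset (filter_subset _ _)
    intro f hf hf2
    obtain ⟨i, hi⟩ : ∃ i, f i = 0 := by
      by_contra hcon
      push Not at hcon
      exact hf2 (mem_filter.2 ⟨hf, fun i => Nat.one_le_iff_ne_zero.2 (hcon i)⟩)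
    apply Finset.prod_eq_zero (mem_univ i)
    rw [hi]
    simp only [hP]
    split_ifs
    · simp [RS, rho]
    · simp [BS, hb0]
  rw [e2]
  simp only [map_sum, sum_mul, mul_sum]
  rw [Finset.sum_comm]
  refine sum_congr rfl fun f hf => ?_
  simp only [mem_filter, Finset.Nat.mem_antidiagonalTuple] at hf
  have hfs : ∑ i : Fin s, f (Fin.castLE hs i) ≤ n := by
    have := Finset.sum_map (univ : Finset (Fin s)) (Fin.castLEEmb hs) f
    simp only [Fin.castLEEmb_apply] at this
    rw [← this, ← hf.1]
    exact Finset.sum_le_sum_of_subset (subset_univ _)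
  have hpr := prod_rho hr e s n (fun i => f (Fin.castLE hs i)) (fun i => hf.2 _) hfs
  set bb := ∏ j ∈ Finset.univ.filter (fun j : Fin δ => s ≤ (j : ℕ)), b (f j) with hbb
  set pf := ∏ i, ((f i).factorial : ℝ) with hpf
  have hpf0 : pf ≠ 0 := Finset.prod_ne_zero_iff.2 fun i _ => by positivity
  have hnf : (n.factorial : ℝ) ≠ 0 := by positivity
  have lhs : ∑ k ∈ range (n+1), ∑ g ∈ (Finset.Nat.antidiagonalTuple s k).filter (fun g => ∀ i, 1 ≤ g i),
      algebraMap ℝ A (c ^ n / (n.factorial : ℝ)) * (algebraMap ℝ A (n.factorial / pf *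
        (p ^ s * (1 - p) ^ (δ - s) * (∏ i : Fin s, r (f (Fin.castLE hs i)) (g i)) * bb)) * e ^ k)
      = algebraMap ℝ A (c ^ n / pf * (p ^ s * (1 - p) ^ (δ - s)) * bb) * ∏ i, rho r e (f (Fin.castLE hs i)) := by
    rw [← hpr, mul_sum]
    refine sum_congr rfl fun k _ => ?_
    rw [map_sum, sum_mul, mul_sum]
    refine sum_congr rfl fun g _ => ?_
    rw [← mul_assoc, ← map_mul, ← mul_assoc (algebraMap ℝ A _) (algebraMap ℝ A _) (e ^ k), ← map_mul]
    congr 2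
    field_simp
  refine lhs.trans ?_
  have rhs1 : ∀ i, PowerSeries.coeff (f i) (P i) = algebraMap ℝ A (c ^ (f i) / ((f i).factorial : ℝ)) *
      (if (i:ℕ) < s then algebraMap ℝ A p * rho r e (f i) else algebraMap ℝ A ((1-p) * b (f i))) := by
    intro i
    simp only [hP]
    split_ifs
    · rw [PowerSeries.coeff_C_mul, RS, PowerSeries.coeff_mk]; ring
    · rw [PowerSeries.coeff_C_mul, BS, PowerSeries.coeff_mk, map_mul, map_mul]; ring
  rw [prod_congr rfl fun i _ => rhs1 i, prod_mul_distrib, Finset.prod_ite, prod_lt hs, ← map_prod, ← map_prod,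
    prod_div_distrib, Finset.prod_pow_eq_pow_sum, hf.1, prod_mul_distrib, prod_mul_distrib, prod_const, prod_const,
    hcard2, card_univ, Fintype.card_fin]
  simp only [not_lt, ← hbb, ← hpf, map_mul, map_pow]
  ring

lemma comb_rec (d : ℕ) {p : ℝ} {r : ℕ → ℕ → ℝ} {b : ℕ → ℝ}
    (h : clusterRec p
      (fun δ => if δ ≤ d then ((d.factorial : ℝ) / ((d - δ).factorial : ℝ)) else 0) r b) 
    (c : ℝ) (e : A) (n : ℕ) :
    ((n:A) + 1) * PowerSeries.coeff (n+1) (RS c r e) = algebraMap ℝ A c * e *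
      PowerSeries.coeff n ((PowerSeries.C (algebraMap ℝ A p) * RS c r e + 
        PowerSeries.C (algebraMap ℝ A (1-p)) * BS A c b + 1)^d) := by
  have hr := r_vanish h
  have hb0 : b 0 = 0 := by rw [h.1]; simp
  set T := PowerSeries.C (algebraMap ℝ A p) * RS c r e + 
        PowerSeries.C (algebraMap ℝ A (1-p)) * BS A c b with hT
  have hT0 : PowerSeries.X ∣ T := by
    rw [PowerSeries.X_dvd_iff, ← PowerSeries.coeff_zero_eq_constantCoeff_apply, hT]
    rw [map_add, PowerSeries.coeff_C_mul, PowerSeries.coeff_C_mul, RS, BS, PowerSeries.coeff_mk, PowerSeries.coeff_mk, hb0]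
    simp [rho]
  obtain ⟨T', hT'⟩ := hT0
  have hTz : ∀ δ, n < δ → PowerSeries.coeff n (T ^ δ) = 0 := by
    intro δ hδ
    rw [hT', mul_pow, PowerSeries.coeff_X_pow_mul', if_neg (by omega)]
  have rhs : PowerSeries.coeff n ((T + 1)^d) = ∑ δ ∈ range (n+1), (d.choose δ : A) * PowerSeries.coeff n (T ^ δ) := by
    rw [add_pow, map_sum]
    have e1 : ∀ δ, PowerSeries.coeff n (T ^ δ * 1 ^ (d - δ) * ((d.choose δ : ℕ) : PowerSeries A)) = 
        (d.choose δ : A) * PowerSeries.coeff n (T ^ δ) := by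
      intro δ
      have : T ^ δ * 1 ^ (d - δ) * ((d.choose δ : ℕ) : PowerSeries A) = PowerSeries.C (d.choose δ : A) * T ^ δ := by
        rw [map_natCast]; ring
      rw [this, PowerSeries.coeff_C_mul]
    simp only [e1]
    trans ∑ δ ∈ range (n + d + 1), (d.choose δ : A) * PowerSeries.coeff n (T ^ δ)
    · apply sum_subset
      · intro x; simp; omega
      · intro x _ hx
        rw [Nat.choose_eq_zero_of_lt (by simp at hx; omega)]; simp
    · symm
      apply sum_subset
      · intro x; simp; omega
      · intro x _ hx
        rw [hTz x (by simp at hx; omega)]; simp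
  rw [rhs]
  have hphi : ∀ δ, ((if δ ≤ d then ((d.factorial : ℝ) / ((d - δ).factorial : ℝ)) else 0) / (δ.factorial : ℝ)) = d.choose δ := by
    intro δ
    split_ifs with hδ
    · rw [Nat.cast_choose ℝ hδ, div_div, mul_comm]
    · rw [Nat.choose_eq_zero_of_lt (by omega)]; simp
  have lhs : ((n:A) + 1) * PowerSeries.coeff (n+1) (RS c r e) = algebraMap ℝ A c * e * 
     (algebraMap ℝ A (c ^ n / (n.factorial : ℝ)) * ∑ k ∈ range (n+1), algebraMap ℝ A (r (n+1) (k+1)) * e ^ k) := by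
    rw [RS, PowerSeries.coeff_mk, rho, show Icc 1 (n+1) = Ico 1 (n+1+1) by ext; simp, Finset.sum_Ico_eq_sum_range, mul_sum, mul_sum, mul_sum, mul_sum]
    have : n + 1 + 1 - 1 = n + 1 := by omega
    rw [this]
    refine sum_congr rfl fun k _ => ?_
    have e2 : ((n:A) + 1) * algebraMap ℝ A (c ^ (n+1) / ((n+1).factorial : ℝ)) = algebraMap ℝ A c * algebraMap ℝ A (c ^ n / (n.factorial : ℝ)) := by
      have : ((n:A)+1) = algebraMap ℝ A ((n:ℝ)+1) := by simp
      rw [this, ← map_mul, ← map_mul]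
      congr 1
      rw [Nat.factorial_succ]
      push_cast
      field_simp
      ring
    rw [← mul_assoc, e2, add_comm 1 k, pow_succ]
    ring
  rw [lhs]
  congr 1
  have hrr : ∀ k, r (n+1) (k+1) = ∑ δ ∈ range (n+1), ∑ s ∈ (range (δ+1)).attach, (δ.choose s.1 : ℝ) * (d.choose δ : ℝ) *
       ∑ f ∈ (Finset.Nat.antidiagonalTuple δ n).filter (fun f => ∀ i, 1 ≤ f i),
            ((n.factorial : ℝ) / ∏ i, ((f i).factorial : ℝ)) *
              ∑ g ∈ (Finset.Nat.antidiagonalTuple s.1 k).filter (fun g => ∀ i, 1 ≤ g i),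
                p ^ s.1 * (1 - p) ^ (δ - s.1) *
                  (∏ i : Fin s.1, r (f (Fin.castLE (Nat.lt_succ_iff.mp (Finset.mem_range.mp s.2)) i)) (g i)) *
                  ∏ j ∈ Finset.univ.filter (fun j : Fin δ => s.1 ≤ (j : ℕ)), b (f j) := by
    intro k
    have := h.2 (n+1) (k+1) (by omega) (by omega)
    simp only [hphi, Nat.add_sub_cancel] at this
    exact this
  simp only [hrr, map_sum, sum_mul, mul_sum (range (n+1))]
  rw [sum_comm]
  refine sum_congr rfl fun δ _ => ?_
  simp only [mul_sum (range (δ+1)).attach]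
  rw [sum_comm, hT, add_pow, map_sum, mul_sum, ← sum_attach (range (δ+1))]
  refine sum_congr rfl fun s _ => ?_
  have hs : s.1 ≤ δ := Nat.lt_succ_iff.mp (Finset.mem_range.mp s.2)
  have hterm := term_lemma hr hb0 p c e n δ s.1 hs
  have e3 : ∀ Z : PowerSeries A, PowerSeries.coeff n (Z * ((δ.choose s.1 : ℕ) : PowerSeries A)) = (δ.choose s.1 : A) * PowerSeries.coeff n Z := by
    intro Z
    have : Z * ((δ.choose s.1 : ℕ) : PowerSeries A) = PowerSeries.C (δ.choose s.1 : A) * Z := by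
      rw [map_natCast]; ring
    rw [this, PowerSeries.coeff_C_mul]
  rw [e3, ← hterm, mul_sum, mul_sum, mul_sum]
  refine sum_congr rfl fun k _ => ?_
  rw [map_mul, map_mul, map_natCast, map_natCast]
  ring

end comb

noncomputable def swp (P : PowerSeries (PowerSeries ℝ)) : PowerSeries (PowerSeries ℝ) :=
  PowerSeries.mk fun k => PowerSeries.mk fun n => PowerSeries.coeff k (PowerSeries.coeff n P)

lemma coeff_swp (P : PowerSeries (PowerSeries ℝ)) (k n : ℕ) :
    PowerSeries.coeff n (PowerSeries.coeff k (swp P)) = PowerSeries.coeff k (PowerSeries.coeff n P) := by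
  simp [swp]

lemma swp_mul (P Q : PowerSeries (PowerSeries ℝ)) : swp (P * Q) = swp P * swp Q := by
  ext k n
  rw [coeff_swp, PowerSeries.coeff_mul, PowerSeries.coeff_mul, map_sum, map_sum]
  simp only [PowerSeries.coeff_mul, coeff_swp]
  rw [sum_comm]

lemma swp_one : swp 1 = 1 := by
  ext k n
  rw [coeff_swp, PowerSeries.coeff_one, PowerSeries.coeff_one]
  split_ifs with h1 h2 h2 <;> simp [PowerSeries.coeff_one, h1, h2]

lemma swp_pow (P : PowerSeries (PowerSeries ℝ)) (m : ℕ) : swp (P ^ m) = swp P ^ m := by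
  induction m with
  | zero => simp [swp_one]
  | succ m ih => rw [pow_succ, pow_succ, swp_mul, ih]

lemma swp_C_exp : swp (PowerSeries.C (PowerSeries.exp ℝ)) = ES := by
  ext k n
  rw [coeff_swp, ES, PowerSeries.coeff_mk, PowerSeries.coeff_C, PowerSeries.coeff_C]
  split_ifs <;> simp [PowerSeries.coeff_exp]

lemma coeff_exp_pow (j k : ℕ) : PowerSeries.coeff k (PowerSeries.exp ℝ ^ j) = (j:ℝ) ^ k / (k.factorial : ℝ) := by
  rw [PowerSeries.exp_pow_eq_rescale_exp, PowerSeries.coeff_rescale, PowerSeries.coeff_exp]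
  simp [div_eq_mul_inv]

lemma coeff_algMap (x : ℝ) : algebraMap ℝ (PowerSeries ℝ) x = PowerSeries.C x := rfl

lemma coeff_RS (c : ℝ) (r : ℕ → ℕ → ℝ) (k n : ℕ) :
    PowerSeries.coeff k (PowerSeries.coeff n (RS c r (PowerSeries.exp ℝ)))
      = c ^ n / (n.factorial : ℝ) * ((∑ j ∈ Icc 1 n, (j:ℝ)^k * r n j) / (k.factorial : ℝ)) := by
  simp only [RS, PowerSeries.coeff_mk, rho, coeff_algMap, PowerSeries.coeff_C_mul, map_sum, coeff_exp_pow, sum_div]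
  congr 1
  exact sum_congr rfl fun _ _ => by ring

/-- for random increasing `d`-ary trees with `1/d < p < 1`, the `k`-th
moment of the root-cluster size, normalized by `n^{k(pd-1)/(d-1)}`, converges to
`D_k Γ(1/(d-1)) / Γ((kpd-k+1)/(d-1))`. -/
theorem stmt13 (d : ℕ) (hd : 2 ≤ d) (p : ℝ) (hp0 : 1 / (d : ℝ) < p) (hp1 : p < 1)
    (r : ℕ → ℕ → ℝ) (b : ℕ → ℝ)
    (hrec : clusterRec p
      (fun δ => if δ ≤ d then ((d.factorial : ℝ) / ((d - δ).factorial : ℝ)) else 0) r b)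
    (D : ℕ → ℝ) (hD1 : D 1 = 1 / (p * d - 1))
    (hDk : ∀ k : ℕ, 2 ≤ k →
      ((k : ℝ) - 1) * (p * d - 1) * D k
        = ∑ j ∈ Finset.Icc 2 (min k d),
            p ^ j * ((d.factorial : ℝ) / ((d - j).factorial : ℝ)) * bellPartial k j D)
    (k : ℕ) (hk : 1 ≤ k) :
    Tendsto (fun n : ℕ =>
        ((∑ j ∈ Finset.Icc 1 n, (j : ℝ) ^ k * r n j) / b n)
          / (n : ℝ) ^ ((k : ℝ) * (p * d - 1) / ((d : ℝ) - 1)))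
      atTop
      (nhds (D k * Real.Gamma (1 / ((d : ℝ) - 1))
        / Real.Gamma (((k : ℝ) * p * d - (k : ℝ) + 1) / ((d : ℝ) - 1)))) := by
  have hd0 : (0:ℝ) < d := by
    have : 0 < d := by omega
    exact_mod_cast this
  have hd1 : 0 < (d:ℝ) - 1 := by
    have : (2:ℝ) ≤ d := by exact_mod_cast hd
    linarith
  have hpd : 0 < p * d - 1 := by
    rw [div_lt_iff₀ hd0] at hp0; linarith
  obtain ⟨α, hα⟩ : ∃ α : ℝ, α = 1 / ((d:ℝ) - 1) := ⟨_, rfl⟩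
  obtain ⟨β, hβ⟩ : ∃ β : ℝ, β = (p * d - 1) * α := ⟨_, rfl⟩
  have hα0 : 0 < α := by rw [hα]; positivity
  have hβ0 : 0 < β := by rw [hβ]; positivity
  have hdα : (d:ℝ) * α = α + 1 := by rw [hα]; field_simp; ring
  have hb0 : b 0 = 0 := by rw [hrec.1]; simp
  set R := RS α r (PowerSeries.exp ℝ) with hR
  set B := BS (PowerSeries ℝ) α b with hB
  set Y0 := PowerSeries.C (algebraMap ℝ (PowerSeries ℝ) p) * R +
        PowerSeries.C (algebraMap ℝ (PowerSeries ℝ) (1-p)) * B + 1 with hY0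
  have hcoB : ∀ k n, PowerSeries.coeff k (PowerSeries.coeff n B) = if k = 0 then α ^ n / (n.factorial : ℝ) * b n else 0 := by
    intro k n
    rw [hB, BS, PowerSeries.coeff_mk, coeff_algMap, PowerSeries.coeff_C]
  have hcoR0 : ∀ n, PowerSeries.coeff 0 (PowerSeries.coeff n R) = α ^ n / (n.factorial : ℝ) * b n := by
    intro n
    rw [hR, coeff_RS, hrec.1]; simp
  have hco1 : ∀ k n, PowerSeries.coeff k (PowerSeries.coeff n (1 : PowerSeries (PowerSeries ℝ))) 
      = if k = 0 ∧ n = 0 then 1 else 0 := by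
    intro k n
    rw [PowerSeries.coeff_one]
    split_ifs with h1 h2 h2 <;> simp_all [PowerSeries.coeff_one]
  have hcoY : ∀ k n, PowerSeries.coeff k (PowerSeries.coeff n Y0) = 
      p * PowerSeries.coeff k (PowerSeries.coeff n R) + (1-p) * PowerSeries.coeff k (PowerSeries.coeff n B)
        + if k = 0 ∧ n = 0 then 1 else 0 := by
    intro k n
    rw [hY0, map_add, map_add, map_add, map_add, PowerSeries.coeff_C_mul, PowerSeries.coeff_C_mul, coeff_algMap,
      coeff_algMap, PowerSeries.coeff_C_mul, PowerSeries.coeff_C_mul, hco1]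
  set Y := swp Y0 with hY
  set F : ℕ → PowerSeries ℝ := fun k => PowerSeries.coeff k (swp R) with hF
  have hall : ∀ k n : ℕ, ((n:ℝ) + 1) * PowerSeries.coeff (n+1) (F k) = α * PowerSeries.coeff n (PowerSeries.coeff k (ES * Y ^ d)) := by
    intro k n
    have h := congrArg (PowerSeries.coeff k) (comb_rec d hrec α (PowerSeries.exp ℝ) n)
    rw [← hR, ← hB, ← hY0] at h
    have e1 : ((n : PowerSeries ℝ) + 1) = PowerSeries.C ((n:ℝ)+1) := by simp
    rw [e1, PowerSeries.coeff_C_mul, coeff_algMap, mul_assoc, PowerSeries.coeff_C_mul] at h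
    have e2 : PowerSeries.exp ℝ * PowerSeries.coeff n (Y0 ^ d) =
        PowerSeries.coeff n (PowerSeries.C (PowerSeries.exp ℝ) * Y0 ^ d) := by
      rw [PowerSeries.coeff_C_mul]
    rw [e2] at h
    rw [hF, coeff_swp, h, ← coeff_swp, swp_mul, swp_C_exp, swp_pow]
  -- row zero
  have hrow0 : PowerSeries.coeff 0 Y = WS α := by
    have hF0 : ∀ n, PowerSeries.coeff n (PowerSeries.coeff 0 Y) = PowerSeries.coeff n (F 0) + if n = 0 then 1 else 0 := by
      intro n
      rw [hF, coeff_swp, coeff_swp, hcoY, hcoR0, hcoB]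
      simp; ring
    have hes : PowerSeries.coeff 0 (ES * Y ^ d) = (PowerSeries.coeff 0 Y) ^ d := by
      rw [PowerSeries.coeff_zero_eq_constantCoeff, map_mul, map_pow]
      have : PowerSeries.constantCoeff ES = 1 := by
        rw [← PowerSeries.coeff_zero_eq_constantCoeff_apply]; simp [ES]
      rw [this, one_mul]
    have hW : (WS α) ^ d = WS (α + 1) := by
      obtain ⟨e, rfl⟩ : ∃ e, d = e + 1 := ⟨d - 1, by omega⟩
      rw [WS_pow]; congr 1; push_cast at hdα; linarith
    ext n
    induction n using Nat.strong_induction_on with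
    | _ n ih =>
    rcases n with _ | n
    · rw [hF0, hF, coeff_swp, hcoR0, hb0]; simp [WS, wc_zero]
    · have h1 : ((n:ℝ) + 1) ≠ 0 := by positivity
      apply mul_left_cancel₀ h1
      rw [hF0, if_neg (by omega), add_zero, hall, hes, 
        coeff_pow_congr (fun i hi => ih i (by omega)) d n le_rfl, hW]
      simp only [WS, PowerSeries.coeff_mk]
      rw [wc_shift]
      field_simp
  have hbn : ∀ n, 1 ≤ n → α ^ n / (n.factorial : ℝ) * b n = wc α n := by
    intro n hn
    have := congrArg (PowerSeries.coeff n) hrow0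
    rw [hY, coeff_swp, hcoY, hcoR0, hcoB, if_pos rfl, if_neg (by omega)] at this
    simp only [WS, PowerSeries.coeff_mk] at this
    linarith
  set C : PowerSeries ℝ := PowerSeries.mk fun k => if k = 0 then 1 else p * (D k / (k.factorial : ℝ)) with hC
  have hC0 : PowerSeries.coeff 0 C = 1 := by rw [hC, PowerSeries.coeff_mk, if_pos rfl]
  have hCk : ∀ k, 1 ≤ k → PowerSeries.coeff k C = p * (D k / (k.factorial : ℝ)) := by
    intro k hk; rw [hC, PowerSeries.coeff_mk, if_neg (by omega)]
  have hmain := abstract_main d hd p α β hα hβ hpd F (by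
      intro k hk
      rw [hF, coeff_swp, hR, coeff_RS]; simp) Y hrow0 (by
      intro k hk
      ext n
      rw [map_smul, hY, hF, coeff_swp, coeff_swp, hcoY, hcoB, if_neg (by omega), if_neg (by omega)]
      simp) (fun k _ n => hall k n) (fun k => D k / (k.factorial : ℝ)) C hC0 hCk (by simp [hD1]) (by
      intro k hk
      have := c_rec d p D C hC0 hCk k hk
      rw [← hDk k hk] at this
      have f1 : (k.factorial : ℝ) ≠ 0 := by positivity
      field_simp
      linarith) k hk
  have hrat := wc_ratio (a := α + k * β) (b := α) (by positivity) hα0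
  have hfin := (hmain.mul hrat).const_mul (k.factorial : ℝ)
  have f1 : (k.factorial : ℝ) ≠ 0 := by positivity
  have g1 : α + k * β = ((k : ℝ) * p * d - (k : ℝ) + 1) / ((d : ℝ) - 1) := by
    rw [hβ, hα]; field_simp; ring
  have g2 : α + k * β - α = (k : ℝ) * (p * d - 1) / ((d : ℝ) - 1) := by
    rw [hβ, hα]; field_simp; ring
  have g3 : (k.factorial : ℝ) * (D k / (k.factorial : ℝ) * (Real.Gamma α / Real.Gamma (α + k * β)))
      = D k * Real.Gamma (1 / ((d : ℝ) - 1))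
        / Real.Gamma (((k : ℝ) * p * d - (k : ℝ) + 1) / ((d : ℝ) - 1)) := by
    rw [← g1, ← hα]; field_simp
  rw [g3, g2] at hfin
  refine hfin.congr' ?_
  filter_upwards [eventually_ge_atTop 1] with n hn
  have w1 := wc_pos (show 0 < α + k * β by positivity) n
  have w2 := wc_pos hα0 n
  have hbe := hbn n hn
  have hn0 : (0:ℝ) < n := by exact_mod_cast hn
  have hpow : (0:ℝ) < (n : ℝ) ^ ((k : ℝ) * (p * d - 1) / ((d : ℝ) - 1)) := by positivity
  have hac : 0 < α ^ n / (n.factorial : ℝ) := by positivity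
  have hb1 : b n ≠ 0 := by
    intro h; rw [h, mul_zero] at hbe; exact w2.ne hbe
  rw [hF, coeff_swp, hR, coeff_RS]
  rw [← hbe]
  field_simp
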